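/- In the RRM setting, suppose additionally that C_log is convex. Then the associated MARM ρ is convex on C_log (ρ(αY_1 + (1−α)Y_2) ≤ αρ(Y_1) + (1−α)ρ(Y_2) for all Y_1, Y_2 ∈ C_log, α ∈ (0,1), extended-real arithmetic) if and only if the MARRM η is logconvex: η(X^α Y^{1−α}) ≤ η(X)^α · η(Y)^{1−α} for all X, Y ∈ C and α ∈ (0,1) (arithmetic in [0,∞]). -/

import Mathlib

open MeasureTheory Filter Set ENNReal

/-- The set of strictly positive random variables (positive representatives of
elements of `L⁰₊₊`). -/
def L0pos (Ω : Type*) : Set (Ω → ℝ) := {X | ∀ ω, 0 < X ω}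

/-- The multi-asset return risk measure (MARRM) associated with the security set `S`,
the relative acceptance set `B` and the pricing map `π`:
`η(X) = inf {π(Z) : Z ∈ S, X/Z ∈ B}`, with `inf ∅ = ∞`. -/
noncomputable def marrm {Ω : Type*} (S B : Set (Ω → ℝ)) (π : (Ω → ℝ) → ℝ) (X : Ω → ℝ) : ℝ≥0∞ :=
  sInf ((fun Z => ENNReal.ofReal (π Z)) '' {Z | Z ∈ S ∧ (fun ω => X ω / Z ω) ∈ B})

/-- `L^∞₊₊`: strictly positive, (essentially) bounded random variables. -/
def LinftyPos {Ω : Type*} [MeasurableSpace Ω] (P : Measure Ω) : Set (Ω → ℝ) :=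
  {X | (∀ ω, 0 < X ω) ∧ ∃ c : ℝ, ∀ᵐ ω ∂P, X ω ≤ c}

/-- The image of a set of random variables under the pointwise logarithm,
e.g. `C_log = {log X : X ∈ C}`. -/
def logIm {Ω : Type*} (A : Set (Ω → ℝ)) : Set (Ω → ℝ) :=
  (fun X => fun ω => Real.log (X ω)) '' A

/-- The multi-asset risk measure (MARM) with security set `Slog`, acceptance set `Anu`
and pricing map `πlog`: `ρ(Y) = inf {πlog(L) : L ∈ Slog, Y - L ∈ Anu}`, with
values in `[-∞,∞]` and `inf ∅ = +∞`. -/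
noncomputable def marm {Ω : Type*} (Slog Anu : Set (Ω → ℝ)) (πlog : (Ω → ℝ) → ℝ)
    (Y : Ω → ℝ) : EReal :=
  sInf ((fun L => (πlog L : EReal)) '' {L | L ∈ Slog ∧ (fun ω => Y ω - L ω) ∈ Anu})

/-- The relative acceptance set `B_ρ̃ = {X ∈ K : ρ̃(X) ≤ 1}` induced by a
return risk measure `ρt` on `K`. -/
def rrmAccept {Ω : Type*} (K : Set (Ω → ℝ)) (ρt : (Ω → ℝ) → ℝ) : Set (Ω → ℝ) :=
  {X | X ∈ K ∧ ρt X ≤ 1}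

/-- The MARM associated with a return risk measurement regime `(B_ρ̃, S, π)` in the
RRM setting: security set `S_log`, acceptance set `A_ν = {Y ∈ K_log : ν(Y) ≤ 0}` with
`ν = log ∘ ρ̃ ∘ exp`, and pricing map `π_log = log ∘ π ∘ exp`. -/
noncomputable def marmOf {Ω : Type*} (S K : Set (Ω → ℝ)) (π ρt : (Ω → ℝ) → ℝ) :
    (Ω → ℝ) → EReal :=
  marm (logIm S) {L | L ∈ logIm K ∧ Real.log (ρt (fun ω => Real.exp (L ω))) ≤ 0}
    (fun L => Real.log (π (fun ω => Real.exp (L ω))))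

/-!
The logarithm is an order isomorphism from `[0,∞]` onto `[-∞,∞]`, so it commutes with infima, and
it sends quotients to differences. Hence it carries the infimum defining `η(X)` to the one defining
`ρ(log X)`, that is `ρ(log X) = log η(X)`. Since it also turns `x ^ a * y ^ b` into
`a * log x + b * log y`, it translates each convexity inequality for `ρ` into the logconvexity
inequality for `η`.
-/

/-- The conjugate `log ∘ f ∘ exp` of `f`, with `exp` taken pointwise: `π_log` for `f = π` and `ν`
for `f = ρ̃`. -/
noncomputable def logConj {Ω : Type*} (f : (Ω → ℝ) → ℝ) (L : Ω → ℝ) : ℝ :=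
  Real.log (f fun ω => Real.exp (L ω))

theorem ennreal_log_sInf (s : Set ℝ≥0∞) :
    ENNReal.log (sInf s) = sInf (ENNReal.log '' s) :=
  map_sInf ENNReal.logOrderIso s

section

variable {Ω : Type*} {S A B K : Set (Ω → ℝ)} {π ρt : (Ω → ℝ) → ℝ} {X Y : Ω → ℝ}

theorem exp_log_of_mem_L0pos (hX : X ∈ L0pos Ω) : (fun ω => Real.exp (Real.log (X ω))) = X :=
  funext fun ω => Real.exp_log (hX ω)

theorem rpow_mul_rpow_mem_L0pos (hX : X ∈ L0pos Ω) (hY : Y ∈ L0pos Ω) (a b : ℝ) :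
    (fun ω => X ω ^ a * Y ω ^ b) ∈ L0pos Ω :=
  fun ω => mul_pos (Real.rpow_pos_of_pos (hX ω) a) (Real.rpow_pos_of_pos (hY ω) b)

theorem log_rpow_mul_rpow_of_mem_L0pos (hX : X ∈ L0pos Ω) (hY : Y ∈ L0pos Ω) (a b : ℝ) :
    (fun ω => Real.log (X ω ^ a * Y ω ^ b))
      = fun ω => a * Real.log (X ω) + b * Real.log (Y ω) := by
  funext ω
  rw [Real.log_mul (Real.rpow_pos_of_pos (hX ω) a).ne' (Real.rpow_pos_of_pos (hY ω) b).ne',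
    Real.log_rpow (hX ω), Real.log_rpow (hY ω)]

theorem mem_logIm_iff_exp_mem (hA : A ⊆ L0pos Ω) :
    Y ∈ logIm A ↔ (fun ω => Real.exp (Y ω)) ∈ A := by
  constructor
  · rintro ⟨X, hX, rfl⟩
    simpa only [exp_log_of_mem_L0pos (hA hX)] using hX
  · exact fun hY => ⟨_, hY, funext fun ω => Real.log_exp (Y ω)⟩

theorem forall_mem_logIm {p : (Ω → ℝ) → Prop} :
    (∀ Y ∈ logIm A, p Y) ↔ ∀ X ∈ A, p fun ω => Real.log (X ω) :=
  forall_mem_image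

theorem logIm_rrmAccept (hK : K ⊆ L0pos Ω) (hρ : ∀ X ∈ K, 0 < ρt X) :
    logIm (rrmAccept K ρt) = {L | L ∈ logIm K ∧ logConj ρt L ≤ 0} := by
  ext L
  rw [mem_ofPred_eq, mem_logIm_iff_exp_mem hK, mem_logIm_iff_exp_mem fun X hX => hK hX.1]
  exact and_congr_right fun hL => (Real.log_nonpos_iff (hρ _ hL).le).symm

theorem marmOf_eq_marm_logIm (hK : K ⊆ L0pos Ω) (hρ : ∀ X ∈ K, 0 < ρt X) :
    marmOf S K π ρt = marm (logIm S) (logIm (rrmAccept K ρt)) (logConj π) := by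
  rw [logIm_rrmAccept hK hρ]
  rfl

theorem logIm_setOf_div_mem (hS : S ⊆ L0pos Ω) (hB : B ⊆ L0pos Ω) (hX : X ∈ L0pos Ω) :
    logIm {Z | Z ∈ S ∧ (fun ω => X ω / Z ω) ∈ B}
      = {L | L ∈ logIm S ∧ (fun ω => Real.log (X ω) - L ω) ∈ logIm B} := by
  ext L
  rw [mem_ofPred_eq, mem_logIm_iff_exp_mem hS, mem_logIm_iff_exp_mem hB,
    mem_logIm_iff_exp_mem fun Z hZ => hS hZ.1]
  simp only [mem_ofPred_eq, Real.exp_sub, Real.exp_log (hX _)]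

theorem marm_logIm_log (hS : S ⊆ L0pos Ω) (hπ : ∀ Z ∈ S, 0 < π Z) (hB : B ⊆ L0pos Ω)
    (hX : X ∈ L0pos Ω) :
    marm (logIm S) (logIm B) (logConj π) (fun ω => Real.log (X ω))
      = ENNReal.log (marrm S B π X) := by
  rw [marm, ← logIm_setOf_div_mem hS hB hX, marrm, ennreal_log_sInf, logIm, image_image,
    image_image]
  refine congrArg sInf (image_congr fun Z hZ => ?_)
  rw [logConj, exp_log_of_mem_L0pos (hS hZ.1), ENNReal.log_ofReal_of_pos (hπ Z hZ.1)]

theorem marm_add_le_iff_marrm_mul_le (hS : S ⊆ L0pos Ω) (hπ : ∀ Z ∈ S, 0 < π Z)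
    (hB : B ⊆ L0pos Ω) (hX : X ∈ L0pos Ω) (hY : Y ∈ L0pos Ω) (a b : ℝ) :
    marm (logIm S) (logIm B) (logConj π) (fun ω => a * Real.log (X ω) + b * Real.log (Y ω))
        ≤ (a : EReal) * marm (logIm S) (logIm B) (logConj π) (fun ω => Real.log (X ω))
          + (b : EReal) * marm (logIm S) (logIm B) (logConj π) (fun ω => Real.log (Y ω))
      ↔ marrm S B π (fun ω => X ω ^ a * Y ω ^ b) ≤ marrm S B π X ^ a * marrm S B π Y ^ b := by
  rw [← log_rpow_mul_rpow_of_mem_L0pos hX hY a b, marm_logIm_log hS hπ hB hX,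
    marm_logIm_log hS hπ hB hY, marm_logIm_log hS hπ hB (rpow_mul_rpow_mem_L0pos hX hY a b),
    ← ENNReal.log_rpow, ← ENNReal.log_rpow, ← ENNReal.log_mul_add, ENNReal.log_le_log_iff]

end

theorem marm_convex_iff_marrm_logconvex_general {Ω : Type*} {C S B : Set (Ω → ℝ)}
    {π : (Ω → ℝ) → ℝ} (hC : C ⊆ L0pos Ω) (hS : S ⊆ L0pos Ω) (hπ : ∀ Z ∈ S, 0 < π Z)
    (hB : B ⊆ L0pos Ω) :
    (∀ Y1 ∈ logIm C, ∀ Y2 ∈ logIm C, ∀ a ∈ Set.Ioo (0:ℝ) 1,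
        marm (logIm S) (logIm B) (logConj π) (fun ω => a * Y1 ω + (1 - a) * Y2 ω)
          ≤ (a : EReal) * marm (logIm S) (logIm B) (logConj π) Y1
            + ((1 - a : ℝ) : EReal) * marm (logIm S) (logIm B) (logConj π) Y2)
      ↔ (∀ X ∈ C, ∀ Y ∈ C, ∀ a ∈ Set.Ioo (0:ℝ) 1,
        marrm S B π (fun ω => X ω ^ a * Y ω ^ (1 - a))
          ≤ marrm S B π X ^ a * marrm S B π Y ^ (1 - a)) := by
  simp only [forall_mem_logIm]
  exact forall₂_congr fun X hX => forall₂_congr fun Y hY => forall₂_congr fun a _ =>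
    marm_add_le_iff_marrm_mul_le hS hπ hB (hC hX) (hC hY) a (1 - a)

theorem marm_convex_iff_marrm_logconvex {Ω : Type*} [MeasurableSpace Ω] (P : Measure Ω) [IsProbabilityMeasure P]
    (C S K : Set (Ω → ℝ)) (π ρt : (Ω → ℝ) → ℝ)
    (hCne : C.Nonempty) (hCpos : C ⊆ L0pos Ω)
    (hSne : S.Nonempty) (hSpos : S ⊆ L0pos Ω)
    (hπpos : ∀ Z ∈ S, 0 < π Z)
    (hKne : K.Nonempty) (hKpos : K ⊆ L0pos Ω)
    (hKcone : ∀ l : ℝ, 0 < l → ∀ X ∈ K, (fun ω => l * X ω) ∈ K)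
    (hKinf : LinftyPos P ⊆ K)
    (hcompat : ∀ X ∈ C, ∀ Z ∈ S, (fun ω => X ω / Z ω) ∈ K)
    (hCmul : ∀ X ∈ C, ∀ Y ∈ C, (fun ω => X ω * Y ω) ∈ C)
    (hCone : (fun _ => (1:ℝ)) ∈ C)
    (hCinv : ∀ X ∈ C, (fun ω => (X ω)⁻¹) ∈ C)
    (hρmono : ∀ X ∈ K, ∀ Y ∈ K, (∀ᵐ ω ∂P, X ω ≤ Y ω) → ρt X ≤ ρt Y)
    (hρhom : ∀ l : ℝ, 0 < l → ∀ X ∈ K, ρt (fun ω => l * X ω) = l * ρt X)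
    (hρpos : ∀ X ∈ K, 0 < ρt X)
    (hρone : ρt (fun _ => (1:ℝ)) = 1)
    (hClogconv : ∀ Y1 ∈ logIm C, ∀ Y2 ∈ logIm C, ∀ a ∈ Set.Ioo (0:ℝ) 1,
      (fun ω => a * Y1 ω + (1 - a) * Y2 ω) ∈ logIm C) :
    (∀ Y1 ∈ logIm C, ∀ Y2 ∈ logIm C, ∀ a ∈ Set.Ioo (0:ℝ) 1,
        marmOf S K π ρt (fun ω => a * Y1 ω + (1 - a) * Y2 ω)
          ≤ (a : EReal) * marmOf S K π ρt Y1 + ((1 - a : ℝ) : EReal) * marmOf S K π ρt Y2)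
      ↔ (∀ X ∈ C, ∀ Y ∈ C, ∀ a ∈ Set.Ioo (0:ℝ) 1,
        marrm S (rrmAccept K ρt) π (fun ω => X ω ^ a * Y ω ^ (1 - a))
          ≤ marrm S (rrmAccept K ρt) π X ^ a * marrm S (rrmAccept K ρt) π Y ^ (1 - a)) := by
  rw [marmOf_eq_marm_logIm hKpos hρpos]
  exact marm_convex_iff_marrm_logconvex_general hCpos hSpos hπpos fun X hX => hKpos hX.1
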